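/- Fix λ' > 0 and for ξ' ∈ ℝ^N let u(y; ξ') = (λ'/(λ'² + |y−ξ'|²))^{(N−4)/2}. Consider the pointwise expression E(y, ξ') = Σ_{i,j,m,s=1}^N H̄_{si}(y) (∂_m∂_m H̄_{js})(y) (∂_i u)(y; ξ') (∂_j u)(y; ξ') (derivatives in y). Then: (i) ∫_{ℝ^N} E(y, 0) dy = 0; and (ii) for all p, q ∈ {1,…,N}, ∫_{ℝ^N} [∂²E/∂ξ'_p∂ξ'_q](y, ξ')|_{ξ'=0} dy = |S^{N−1}| · (Σ_{i,j,k=1}^N (W_{ikjp}+W_{ipjk})(W_{ikjq}+W_{iqjk})) · λ'^{N−4} · [2(N−4)²/(N(N+2))] · ∫₀^∞ [ (N+4) f(r²) f'(r²) + 2 r² f(r²) f''(r²) ] r^{N+3}/(λ'²+r²)^{N−2} dr. -/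

import Mathlib

open scoped BigOperators
open MeasureTheory

noncomputable section

/-- The partial derivative `∂f/∂y_i` of a function on Euclidean space. -/
def pd (N : ℕ) (i : Fin N) (f : EuclideanSpace ℝ (Fin N) → ℝ) :
    EuclideanSpace ℝ (Fin N) → ℝ :=
  fun y => fderiv ℝ f y (EuclideanSpace.single i 1)

/-- `H_{ij}(y) = Σ_{p,q} W_{ipjq} y_p y_q`. -/
def Hmat (N : ℕ) (W : Fin N → Fin N → Fin N → Fin N → ℝ) (i j : Fin N)
    (y : EuclideanSpace ℝ (Fin N)) : ℝ :=
  ∑ p : Fin N, ∑ q : Fin N, W i p j q * y p * y q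

/-- `H̄_{ij}(y) = f(|y|²) H_{ij}(y)`. -/
def Hbar (N : ℕ) (W : Fin N → Fin N → Fin N → Fin N → ℝ) (f : ℝ → ℝ) (i j : Fin N)
    (y : EuclideanSpace ℝ (Fin N)) : ℝ :=
  f (‖y‖ ^ 2) * Hmat N W i j y

/-- The surface measure on the unit sphere `S^{N-1} ⊂ ℝ^N`. -/
def sphereMeasure (N : ℕ) :
    Measure (Metric.sphere (0 : EuclideanSpace ℝ (Fin N)) 1) :=
  (volume : Measure (EuclideanSpace ℝ (Fin N))).toSphere

/-- `|S^{N-1}|`, the total surface measure of the unit sphere in `ℝ^N`. -/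
def sphereArea (N : ℕ) : ℝ := (sphereMeasure N Set.univ).toReal

/-- The second mixed derivative `∂²F/∂ξ_p∂ξ_q` at `ξ = 0` of a function of `ξ ∈ ℝ^N`. -/
def d2Param (N : ℕ) (p q : Fin N) (F : EuclideanSpace ℝ (Fin N) → ℝ) : ℝ :=
  deriv (fun a : ℝ =>
    deriv (fun b : ℝ =>
      F (a • EuclideanSpace.single p (1 : ℝ) + b • EuclideanSpace.single q (1 : ℝ))) 0) 0

/-!
Because `W` is skew in its last two indices, `H(y) y = 0`; as `∇u` is a multiple of `y - ξ'`, only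
`H(y) ξ'` survives in `E`. The entries of `H` are harmonic quadratic forms, so `Δ(f(|y|²) H)` is a
radial multiple of `H`, and `E(y, ξ')` is a factor depending on `|y|` and `|y - ξ'|` times
`|H(y) ξ'|²`. It therefore vanishes to second order at `ξ' = 0`, where its Hessian is a radial
function times `∑ s, H_{sp}(y) H_{sq}(y)`. Polar coordinates separate the radial integral from a
fourth moment of the sphere, and the latter is computed by comparison with the Gaussian integral,
for which integration by parts gives all moments.
-/

section PositiveHomogeneity

variable {V : Type*}

/-- Positive homogeneity of degree `k` for a real function on a real vector space. Only positive
scalars are tested, so that powers of a norm qualify. -/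
def IsPosHomogeneous [SMul ℝ V] (k : ℕ) (Y : V → ℝ) : Prop :=
  ∀ r : ℝ, 0 < r → ∀ y, Y (r • y) = r ^ k * Y y

lemma IsPosHomogeneous.mul [SMul ℝ V] {k l : ℕ} {Y Z : V → ℝ} (hY : IsPosHomogeneous k Y)
    (hZ : IsPosHomogeneous l Z) : IsPosHomogeneous (k + l) (fun y => Y y * Z y) := by
  intro r hr y
  simp only [hY r hr, hZ r hr]
  ring

lemma IsPosHomogeneous.sum [SMul ℝ V] {ι : Type*} {k : ℕ} {Y : ι → V → ℝ} (s : Finset ι)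
    (hY : ∀ i, IsPosHomogeneous k (Y i)) : IsPosHomogeneous k (fun y => ∑ i ∈ s, Y i y) := by
  intro r hr y
  simp only [hY _ r hr, Finset.mul_sum]

lemma IsPosHomogeneous.fderiv [NormedAddCommGroup V] [NormedSpace ℝ V] {k : ℕ} {F : V → ℝ}
    (hF : IsPosHomogeneous (k + 1) F) (a : V) :
    IsPosHomogeneous k (fun y => fderiv ℝ F y a) := by
  intro r hr y
  have hscale : (fun y => F (r • y)) = r ^ (k + 1) • F := funext (hF r hr)
  have hfderiv : r • _root_.fderiv ℝ F (r • y) = r ^ (k + 1) • _root_.fderiv ℝ F y := by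
    rw [← fderiv_comp_smul, hscale, fderiv_const_smul_field, Pi.smul_apply]
  have happly : r * _root_.fderiv ℝ F (r • y) a = r ^ (k + 1) * _root_.fderiv ℝ F y a :=
    DFunLike.congr_fun hfderiv a
  refine mul_left_cancel₀ hr.ne' (happly.trans ?_)
  ring

end PositiveHomogeneity

section PolarCoordinates

variable {V : Type*} [NormedAddCommGroup V] [NormedSpace ℝ V]

lemma integral_volumeIoiPow (n : ℕ) (g : ℝ → ℝ) :
    ∫ r, g r ∂Measure.volumeIoiPow n = ∫ r in Set.Ioi (0 : ℝ), r ^ n * g r := by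
  simp only [Measure.volumeIoiPow, ENNReal.ofReal]
  rw [integral_withDensity_eq_integral_smul (by fun_prop),
    integral_subtype_comap measurableSet_Ioi fun r => Real.toNNReal (r ^ n) • g r]
  refine setIntegral_congr_fun measurableSet_Ioi fun r (hr : 0 < r) => ?_
  simp [NNReal.smul_def, hr.le]

lemma integrable_volumeIoiPow_iff (n : ℕ) (g : ℝ → ℝ) :
    Integrable (fun r : Set.Ioi (0 : ℝ) => g r) (Measure.volumeIoiPow n)
      ↔ IntegrableOn (fun r => r ^ n * g r) (Set.Ioi 0) := by
  simp only [Measure.volumeIoiPow, ENNReal.ofReal]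
  rw [integrable_withDensity_iff_integrable_smul (by fun_prop),
    integrableOn_iff_comap_subtypeVal measurableSet_Ioi]
  refine integrable_congr (Filter.Eventually.of_forall fun r => ?_)
  simp [NNReal.smul_def, (Set.mem_Ioi.1 r.2).le]

lemma IsPosHomogeneous.mul_eq_comp_homeomorphUnitSphereProd {k : ℕ} {Y : V → ℝ}
    (hY : IsPosHomogeneous k Y) (φ : ℝ → ℝ) :
    (fun y : ({0}ᶜ : Set V) => φ ‖y.1‖ * Y y) =
      (fun z : Metric.sphere (0 : V) 1 × Set.Ioi (0 : ℝ) => Y z.1 * (φ z.2 * z.2.1 ^ k))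
        ∘ homeomorphUnitSphereProd V := by
  funext y
  have hy : 0 < ‖y.1‖ := norm_pos_iff.2 y.2
  have hYy := hY ‖y.1‖ hy (‖y.1‖⁻¹ • y.1)
  rw [smul_inv_smul₀ hy.ne'] at hYy
  simp only [Function.comp_apply, homeomorphUnitSphereProd_apply_fst_coe,
    homeomorphUnitSphereProd_apply_snd_coe, hYy]
  ring

variable [FiniteDimensional ℝ V] [Nontrivial V] [MeasurableSpace V] [BorelSpace V]
  (μ : Measure V) [μ.IsAddHaarMeasure]

lemma integral_comp_norm_mul_of_isPosHomogeneous {k : ℕ} {Y : V → ℝ}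
    (hY : IsPosHomogeneous k Y) (φ : ℝ → ℝ) :
    ∫ y, φ ‖y‖ * Y y ∂μ = (∫ ω, Y ω ∂μ.toSphere)
      * ∫ r in Set.Ioi (0 : ℝ), r ^ (Module.finrank ℝ V - 1) * (φ r * r ^ k) := by
  calc
    _ = ∫ y : ({0}ᶜ : Set V), φ ‖y.1‖ * Y y ∂μ.comap (↑) := by
      rw [integral_subtype_comap (measurableSet_singleton _).compl fun y => φ ‖y‖ * Y y,
        restrict_compl_singleton]
    _ = ∫ z : Metric.sphere (0 : V) 1 × Set.Ioi (0 : ℝ), Y z.1 * (φ z.2 * z.2.1 ^ k)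
          ∂μ.toSphere.prod (.volumeIoiPow (Module.finrank ℝ V - 1)) := by
      rw [hY.mul_eq_comp_homeomorphUnitSphereProd φ]
      exact μ.measurePreserving_homeomorphUnitSphereProd.integral_comp
        (Homeomorph.measurableEmbedding _) fun z => Y z.1 * (φ z.2 * z.2.1 ^ k)
    _ = _ := by
      rw [integral_prod_mul (fun ω : Metric.sphere (0 : V) 1 => Y ω)
        (fun r : Set.Ioi (0 : ℝ) => φ r * r.1 ^ k),
        integral_volumeIoiPow _ fun r => φ r * r ^ k]

lemma integrable_comp_norm_mul_of_isPosHomogeneous {k : ℕ} {Y : V → ℝ}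
    (hY : IsPosHomogeneous k Y) (hcont : Continuous Y) {φ : ℝ → ℝ}
    (hφ : IntegrableOn (fun r => r ^ (Module.finrank ℝ V - 1) * (φ r * r ^ k)) (Set.Ioi 0)) :
    Integrable (fun y => φ ‖y‖ * Y y) μ := by
  have hsphere : Integrable (fun ω : Metric.sphere (0 : V) 1 => Y ω) μ.toSphere :=
    (hcont.comp continuous_subtype_val).integrable_of_hasCompactSupport (.of_compactSpace _)
  have hprod := hsphere.mul_prod ((integrable_volumeIoiPow_iff _ fun r => φ r * r ^ k).2 hφ)
  rw [← restrict_compl_singleton (μ := μ) 0, ← IntegrableOn,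
    integrableOn_iff_comap_subtypeVal (measurableSet_singleton _).compl]
  change Integrable (fun y : ({0}ᶜ : Set V) => φ ‖y.1‖ * Y y) _
  rw [hY.mul_eq_comp_homeomorphUnitSphereProd φ]
  exact (μ.measurePreserving_homeomorphUnitSphereProd.integrable_comp_emb
    (Homeomorph.measurableEmbedding _)).2 hprod

end PolarCoordinates

section GaussianMoments

lemma integrableOn_Ioi_pow_mul_exp_neg_sq (k : ℕ) :
    IntegrableOn (fun r : ℝ => r ^ k * Real.exp (-r ^ 2)) (Set.Ioi 0) := by
  have := integrableOn_rpow_mul_exp_neg_mul_sq one_pos (s := k)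
    (neg_one_lt_zero.trans_le k.cast_nonneg)
  simpa using this

lemma integral_Ioi_pow_mul_exp_neg_sq (k : ℕ) :
    ∫ r in Set.Ioi (0 : ℝ), r ^ k * Real.exp (-r ^ 2) = Real.Gamma ((k + 1) / 2) / 2 := by
  have := integral_rpow_mul_exp_neg_mul_rpow two_pos (q := k)
    (neg_one_lt_zero.trans_le k.cast_nonneg) one_pos
  simpa [div_eq_inv_mul] using this

lemma integral_Ioi_pow_add_two_mul_exp_neg_sq (k : ℕ) :
    ∫ r in Set.Ioi (0 : ℝ), r ^ (k + 2) * Real.exp (-r ^ 2)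
      = (k + 1) / 2 * ∫ r in Set.Ioi (0 : ℝ), r ^ k * Real.exp (-r ^ 2) := by
  have hshift : (((k + 2 : ℕ) : ℝ) + 1) / 2 = ((k : ℝ) + 1) / 2 + 1 := by push_cast; ring
  rw [integral_Ioi_pow_mul_exp_neg_sq, integral_Ioi_pow_mul_exp_neg_sq, hshift,
    Real.Gamma_add_one (by positivity)]
  ring

variable {V : Type*} [NormedAddCommGroup V] [InnerProductSpace ℝ V]

lemma isPosHomogeneous_inner (a : V) : IsPosHomogeneous 1 (inner ℝ a) := by
  intro r _ y
  rw [inner_smul_right, pow_one]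

lemma fderiv_inner_right (a y v : V) : fderiv ℝ (inner ℝ a) y v = inner ℝ a v :=
  DFunLike.congr_fun (innerSL ℝ a).fderiv v

lemma fderiv_exp_neg_norm_sq (y a : V) :
    fderiv ℝ (fun y => Real.exp (-‖y‖ ^ 2)) y a = -2 * (inner ℝ a y * Real.exp (-‖y‖ ^ 2)) := by
  have hderiv : HasFDerivAt (fun y : V => Real.exp (-‖y‖ ^ 2)) _ y :=
    (hasFDerivAt_id y).norm_sq.neg.exp
  rw [hderiv.fderiv]
  simp [real_inner_comm]
  ring

variable [FiniteDimensional ℝ V] [Nontrivial V] [MeasurableSpace V] [BorelSpace V]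

lemma integrable_mul_exp_neg_norm_sq {k : ℕ} {F : V → ℝ} (hF : IsPosHomogeneous k F)
    (hcont : Continuous F) : Integrable (fun y => F y * Real.exp (-‖y‖ ^ 2)) := by
  simp_rw [mul_comm (F _)]
  refine integrable_comp_norm_mul_of_isPosHomogeneous volume hF hcont
    (φ := fun r => Real.exp (-r ^ 2)) ?_
  refine (integrableOn_Ioi_pow_mul_exp_neg_sq (Module.finrank ℝ V - 1 + k)).congr_fun
    (fun r _ => ?_) measurableSet_Ioi
  ring

-- Integration by parts, since the Gaussian satisfies `∂ₐ e^{-|y|²} = -2 ⟪a, y⟫ e^{-|y|²}`.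
lemma integral_inner_mul_exp_neg_norm_sq {k : ℕ} {F : V → ℝ} (hF : IsPosHomogeneous (k + 1) F)
    (hdiff : ContDiff ℝ 1 F) (a : V) :
    ∫ y, inner ℝ a y * F y * Real.exp (-‖y‖ ^ 2)
      = 1 / 2 * ∫ y, fderiv ℝ F y a * Real.exp (-‖y‖ ^ 2) := by
  have hrw : ∀ y, F y * fderiv ℝ (fun y => Real.exp (-‖y‖ ^ 2)) y a
      = -2 * (inner ℝ a y * F y * Real.exp (-‖y‖ ^ 2)) := fun y => by
    rw [fderiv_exp_neg_norm_sq]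
    ring
  have hparts := integral_mul_fderiv_eq_neg_fderiv_mul_of_integrable (μ := (volume : Measure V))
    (f := F) (g := fun y => Real.exp (-‖y‖ ^ 2)) (v := a)
    (integrable_mul_exp_neg_norm_sq (hF.fderiv a)
      ((hdiff.continuous_fderiv one_ne_zero).clm_apply continuous_const))
    (by
      simp_rw [hrw]
      exact (integrable_mul_exp_neg_norm_sq ((isPosHomogeneous_inner a).mul hF)
        ((innerSL ℝ a).continuous.mul hdiff.continuous)).const_mul _)
    (integrable_mul_exp_neg_norm_sq hF hdiff.continuous)
    (fun y _ => hdiff.differentiable one_ne_zero y)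
    (fun y _ => ((contDiff_norm_sq ℝ (n := 1)).neg.exp.differentiable one_ne_zero) y)
  simp_rw [hrw] at hparts
  rw [integral_const_mul] at hparts
  linarith

lemma integral_inner_mul_inner_mul_exp_neg_norm_sq (a b : V) :
    ∫ y, inner ℝ a y * inner ℝ b y * Real.exp (-‖y‖ ^ 2)
      = 1 / 2 * inner ℝ a b * ∫ y : V, Real.exp (-‖y‖ ^ 2) := by
  rw [integral_inner_mul_exp_neg_norm_sq (isPosHomogeneous_inner b) (innerSL ℝ b).contDiff]
  simp_rw [fderiv_inner_right]
  rw [integral_const_mul, real_inner_comm]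
  ring

lemma integral_inner_four_mul_exp_neg_norm_sq (a b c d : V) :
    ∫ y, inner ℝ a y * (inner ℝ b y * (inner ℝ c y * inner ℝ d y)) * Real.exp (-‖y‖ ^ 2)
      = 1 / 4 * (inner ℝ a b * inner ℝ c d + inner ℝ a c * inner ℝ b d
        + inner ℝ a d * inner ℝ b c) * ∫ y : V, Real.exp (-‖y‖ ^ 2) := by
  have hsmooth : ∀ v : V, ContDiff ℝ 1 (inner ℝ v) := fun v => (innerSL ℝ v).contDiff
  have hdiff : ∀ v : V, Differentiable ℝ (inner ℝ v) := fun v => (innerSL ℝ v).differentiable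
  have hcubic : IsPosHomogeneous (2 + 1)
      fun y => inner ℝ b y * (inner ℝ c y * inner ℝ d y) :=
    (isPosHomogeneous_inner b).mul ((isPosHomogeneous_inner c).mul (isPosHomogeneous_inner d))
  have hint : ∀ u v : V, Integrable fun y => inner ℝ u y * inner ℝ v y * Real.exp (-‖y‖ ^ 2) :=
    fun u v => integrable_mul_exp_neg_norm_sq
      ((isPosHomogeneous_inner u).mul (isPosHomogeneous_inner v))
      ((hsmooth u).continuous.mul (hsmooth v).continuous)
  have hfderiv : ∀ y, fderiv ℝ (fun y => inner ℝ b y * (inner ℝ c y * inner ℝ d y)) y a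
      * Real.exp (-‖y‖ ^ 2) = inner ℝ a b * (inner ℝ c y * inner ℝ d y * Real.exp (-‖y‖ ^ 2))
        + inner ℝ a c * (inner ℝ b y * inner ℝ d y * Real.exp (-‖y‖ ^ 2))
        + inner ℝ a d * (inner ℝ b y * inner ℝ c y * Real.exp (-‖y‖ ^ 2)) := fun y => by
    rw [fderiv_fun_mul (hdiff b y) ((hdiff c).fun_mul (hdiff d) y),
      fderiv_fun_mul (hdiff c y) (hdiff d y)]
    simp only [add_apply, smul_apply, fderiv_inner_right, smul_eq_mul, smul_add, real_inner_comm a]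
    ring
  rw [integral_inner_mul_exp_neg_norm_sq hcubic
    ((hsmooth b).mul ((hsmooth c).mul (hsmooth d)))]
  simp_rw [hfderiv]
  rw [integral_add (((hint c d).const_mul _).fun_add ((hint b d).const_mul _))
      ((hint b c).const_mul _),
    integral_add ((hint c d).const_mul _) ((hint b d).const_mul _)]
  simp only [integral_const_mul, integral_inner_mul_inner_mul_exp_neg_norm_sq]
  ring

-- The moments are read off the Gaussian ones: both are related by polar coordinates.
lemma integral_toSphere_inner_four (a b c d : V) :
    ∫ ω, inner ℝ a ω.1 * (inner ℝ b ω.1 * (inner ℝ c ω.1 * inner ℝ d ω.1))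
        ∂(volume : Measure V).toSphere
      = (volume : Measure V).toSphere.real Set.univ
          / (Module.finrank ℝ V * (Module.finrank ℝ V + 2))
        * (inner ℝ a b * inner ℝ c d + inner ℝ a c * inner ℝ b d
          + inner ℝ a d * inner ℝ b c) := by
  obtain ⟨m, hm⟩ := Nat.exists_eq_succ_of_ne_zero (Module.finrank_pos (R := ℝ) (M := V)).ne'
  have hmass := integral_comp_norm_mul_of_isPosHomogeneous (volume : Measure V)
    (k := 0) (Y := fun _ => 1) (fun r _ y => by simp) (fun r => Real.exp (-r ^ 2))
  have hmoment := integral_comp_norm_mul_of_isPosHomogeneous (volume : Measure V)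
    ((isPosHomogeneous_inner a).mul ((isPosHomogeneous_inner b).mul
      ((isPosHomogeneous_inner c).mul (isPosHomogeneous_inner d)))) (fun r => Real.exp (-r ^ 2))
  have hradial : ∫ r in Set.Ioi (0 : ℝ), r ^ m * (Real.exp (-r ^ 2) * r ^ (1 + (1 + (1 + 1))))
      = ((m : ℝ) + 3) / 2 * (((m : ℝ) + 1) / 2
        * ∫ r in Set.Ioi (0 : ℝ), r ^ m * Real.exp (-r ^ 2)) := by
    rw [← integral_Ioi_pow_add_two_mul_exp_neg_sq]
    convert integral_Ioi_pow_add_two_mul_exp_neg_sq (m + 2) using 3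
    · ring
    · push_cast; ring
  have hpos : 0 < ∫ r in Set.Ioi (0 : ℝ), r ^ m * Real.exp (-r ^ 2) := by
    rw [integral_Ioi_pow_mul_exp_neg_sq]
    exact half_pos (Real.Gamma_pos_of_pos (by positivity))
  simp only [mul_one, pow_zero, integral_const, smul_eq_mul, hm, Nat.succ_eq_add_one,
    Nat.add_sub_cancel] at hmass hmoment
  simp_rw [mul_comm (Real.exp _) (inner ℝ a _ * _)] at hmoment
  rw [integral_inner_four_mul_exp_neg_norm_sq, hmass, hradial] at hmoment
  rw [hm, div_mul_eq_mul_div, eq_div_iff (by positivity)]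
  refine mul_right_cancel₀ hpos.ne' ?_
  push_cast
  linear_combination -4 * hmoment

end GaussianMoments

section SphericalQuadraticForms

variable {ι : Type*} [Fintype ι] [Nonempty ι]

lemma integral_toSphere_coord_four [DecidableEq ι] (a b c d : ι) :
    ∫ ω, ω.1 a * (ω.1 b * (ω.1 c * ω.1 d)) ∂(volume : Measure (EuclideanSpace ℝ ι)).toSphere
      = (volume : Measure (EuclideanSpace ℝ ι)).toSphere.real Set.univ
          / (Fintype.card ι * (Fintype.card ι + 2))
        * ((if a = b then 1 else 0) * (if c = d then 1 else 0)
          + (if a = c then 1 else 0) * (if b = d then 1 else 0)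
          + (if a = d then 1 else 0) * (if b = c then 1 else 0)) := by
  have := integral_toSphere_inner_four (EuclideanSpace.single a (1 : ℝ))
    (EuclideanSpace.single b 1) (EuclideanSpace.single c 1) (EuclideanSpace.single d 1)
  simpa only [EuclideanSpace.inner_single_left, map_one, one_mul, PiLp.single_apply,
    finrank_euclideanSpace] using this

lemma integral_toSphere_quadraticForm_mul (A B : ι → ι → ℝ) :
    ∫ ω, (∑ a, ∑ b, A a b * ω.1 a * ω.1 b) * (∑ c, ∑ d, B c d * ω.1 c * ω.1 d)
        ∂(volume : Measure (EuclideanSpace ℝ ι)).toSphere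
      = (volume : Measure (EuclideanSpace ℝ ι)).toSphere.real Set.univ
          / (Fintype.card ι * (Fintype.card ι + 2))
        * ((∑ a, A a a) * (∑ c, B c c) + ∑ a, ∑ b, A a b * (B a b + B b a)) := by
  classical
  have hexpand : ∀ ω : Metric.sphere (0 : EuclideanSpace ℝ ι) 1,
      (∑ a, ∑ b, A a b * ω.1 a * ω.1 b) * (∑ c, ∑ d, B c d * ω.1 c * ω.1 d)
        = ∑ a, ∑ b, ∑ c, ∑ d, A a b * B c d * (ω.1 a * (ω.1 b * (ω.1 c * ω.1 d))) := fun ω => by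
    simp_rw [Finset.sum_mul, Finset.mul_sum]
    refine Finset.sum_congr rfl fun a _ => Finset.sum_congr rfl fun b _ =>
      Finset.sum_congr rfl fun c _ => Finset.sum_congr rfl fun d _ => by ring
  have hint : ∀ a b c d, Integrable (fun ω : Metric.sphere (0 : EuclideanSpace ℝ ι) 1 =>
      A a b * B c d * (ω.1 a * (ω.1 b * (ω.1 c * ω.1 d)))) volume.toSphere := fun a b c d =>
    Continuous.integrable_of_hasCompactSupport (by fun_prop) (.of_compactSpace _)
  have hcontract : ∀ a b, ∑ c, ∑ d, A a b * B c d
      * ((if a = b then 1 else 0) * (if c = d then 1 else 0)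
        + (if a = c then 1 else 0) * (if b = d then 1 else 0)
        + (if a = d then 1 else 0) * (if b = c then 1 else 0))
      = (if a = b then A a b * ∑ c, B c c else 0) + A a b * (B a b + B b a) := fun a b => by
    simp only [mul_add, Finset.sum_add_distrib, mul_ite, mul_one, mul_zero, Finset.sum_ite_eq,
      Finset.sum_ite_irrel, Finset.sum_const_zero, Finset.mem_univ, if_true,
      Finset.mul_sum]
    ring
  simp_rw [hexpand, integral_finsetSum _ fun a _ => integrable_finsetSum _ fun b _ =>
      integrable_finsetSum _ fun c _ => integrable_finsetSum _ fun d _ => hint a b c d,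
    integral_finsetSum _ fun b _ => integrable_finsetSum _ fun c _ =>
      integrable_finsetSum _ fun d _ => hint _ b c d,
    integral_finsetSum _ fun c _ => integrable_finsetSum _ fun d _ => hint _ _ c d,
    integral_finsetSum _ fun d _ => hint _ _ _ d, integral_const_mul,
    integral_toSphere_coord_four, mul_left_comm _ (_ / _ : ℝ), ← Finset.mul_sum, hcontract,
    Finset.sum_add_distrib, Finset.sum_ite_eq, Finset.mem_univ, if_true, Finset.sum_mul]

end SphericalQuadraticForms

section PartialDerivatives

variable {N : ℕ} {f g : EuclideanSpace ℝ (Fin N) → ℝ} {y : EuclideanSpace ℝ (Fin N)}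

lemma pd_add (i : Fin N) (hf : DifferentiableAt ℝ f y) (hg : DifferentiableAt ℝ g y) :
    pd N i (fun y => f y + g y) y = pd N i f y + pd N i g y := by
  simp [pd, fderiv_fun_add hf hg]

lemma pd_mul (i : Fin N) (hf : DifferentiableAt ℝ f y) (hg : DifferentiableAt ℝ g y) :
    pd N i (fun y => f y * g y) y = pd N i f y * g y + f y * pd N i g y := by
  simp only [pd, fderiv_fun_mul hf hg, add_apply, smul_apply, smul_eq_mul]
  ring

lemma pd_const_mul (i : Fin N) (c : ℝ) (hf : DifferentiableAt ℝ f y) :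
    pd N i (fun y => c * f y) y = c * pd N i f y := by
  simp [pd, fderiv_const_mul hf]

lemma pd_sum {κ : Type*} [Fintype κ] {F : κ → EuclideanSpace ℝ (Fin N) → ℝ} (i : Fin N)
    (hF : ∀ k, DifferentiableAt ℝ (F k) y) :
    pd N i (fun y => ∑ k, F k y) y = ∑ k, pd N i (F k) y := by
  simp [pd, fderiv_fun_sum fun k _ => hF k]

lemma pd_coord (i p : Fin N) :
    pd N i (fun y : EuclideanSpace ℝ (Fin N) => y p) y = if i = p then 1 else 0 := by
  have hderiv := (EuclideanSpace.proj (𝕜 := ℝ) p : EuclideanSpace ℝ (Fin N) →L[ℝ] ℝ).fderiv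
    (x := y)
  simpa [pd, eq_comm] using DFunLike.congr_fun hderiv (EuclideanSpace.single i 1)

lemma pd_linear (i : Fin N) (c : Fin N → ℝ) :
    pd N i (fun y : EuclideanSpace ℝ (Fin N) => ∑ q, c q * y q) y = c i := by
  have hcoord : ∀ q, DifferentiableAt ℝ (fun y : EuclideanSpace ℝ (Fin N) => y q) y :=
    fun q => by fun_prop
  simp [pd_sum i fun q => (hcoord q).const_mul (c q), pd_const_mul i _ (hcoord _), pd_coord]

lemma pd_quadratic (i : Fin N) (A : Fin N → Fin N → ℝ) :
    pd N i (fun y : EuclideanSpace ℝ (Fin N) => ∑ p, ∑ q, A p q * y p * y q) y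
      = ∑ q, (A i q + A q i) * y q := by
  have hcoord : ∀ p, DifferentiableAt ℝ (fun y : EuclideanSpace ℝ (Fin N) => y p) y :=
    fun p => by fun_prop
  have hterm : ∀ p q, pd N i (fun y : EuclideanSpace ℝ (Fin N) => A p q * y p * y q) y
      = (if i = p then A p q * y q else 0) + (if i = q then A p q * y p else 0) := fun p q => by
    rw [pd_mul i ((hcoord p).const_mul _) (hcoord q), pd_const_mul i _ (hcoord p), pd_coord,
      pd_coord]
    split_ifs <;> ring
  rw [pd_sum i fun p => by fun_prop]
  simp_rw [pd_sum i fun q => ((hcoord _).const_mul _).fun_mul (hcoord q), hterm,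
    Finset.sum_add_distrib, add_mul]
  simp [Finset.sum_add_distrib]

lemma pd_comp_norm_sub_sq {F : ℝ → ℝ} {F' : ℝ} (i : Fin N) (ξ : EuclideanSpace ℝ (Fin N))
    (hF : HasDerivAt F F' (‖y - ξ‖ ^ 2)) :
    pd N i (fun y => F (‖y - ξ‖ ^ 2)) y = 2 * F' * (y i - ξ i) := by
  have hderiv : HasFDerivAt (fun y => F (‖y - ξ‖ ^ 2)) _ y :=
    hF.comp_hasFDerivAt y ((hasFDerivAt_id y).sub_const ξ).norm_sq
  simp only [pd, hderiv.fderiv]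
  simp [EuclideanSpace.inner_single_right]
  ring

lemma pd_comp_norm_sq {F : ℝ → ℝ} (i : Fin N) (hF : DifferentiableAt ℝ F (‖y‖ ^ 2)) :
    pd N i (fun y => F (‖y‖ ^ 2)) y = 2 * deriv F (‖y‖ ^ 2) * y i := by
  simpa using pd_comp_norm_sub_sq i 0 (by simpa using hF.hasDerivAt)

lemma pd_pd_comp_norm_sq_mul {F : ℝ → ℝ} {Q : EuclideanSpace ℝ (Fin N) → ℝ}
    (hF : Differentiable ℝ F) (hF' : Differentiable ℝ (deriv F)) (hQ : Differentiable ℝ Q)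
    (m : Fin N) (hQ' : Differentiable ℝ (pd N m Q)) (y : EuclideanSpace ℝ (Fin N)) :
    pd N m (pd N m fun y => F (‖y‖ ^ 2) * Q y) y
      = 4 * deriv (deriv F) (‖y‖ ^ 2) * Q y * y m ^ 2 + 2 * deriv F (‖y‖ ^ 2) * Q y
        + 4 * deriv F (‖y‖ ^ 2) * (y m * pd N m Q y) + F (‖y‖ ^ 2) * pd N m (pd N m Q) y := by
  have hnorm : Differentiable ℝ fun y : EuclideanSpace ℝ (Fin N) => ‖y‖ ^ 2 :=
    (contDiff_norm_sq ℝ (n := 1)).differentiable one_ne_zero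
  have hF0 : Differentiable ℝ fun y : EuclideanSpace ℝ (Fin N) => F (‖y‖ ^ 2) := hF.comp hnorm
  have hF1 : Differentiable ℝ fun y : EuclideanSpace ℝ (Fin N) => deriv F (‖y‖ ^ 2) :=
    hF'.comp hnorm
  have hcoord : Differentiable ℝ fun y : EuclideanSpace ℝ (Fin N) => y m := by fun_prop
  have hfirst : (pd N m fun y => F (‖y‖ ^ 2) * Q y)
      = fun y => 2 * (deriv F (‖y‖ ^ 2) * y m * Q y) + F (‖y‖ ^ 2) * pd N m Q y := by
    funext y
    rw [pd_mul m (hF0 y) (hQ y), pd_comp_norm_sq m (hF _)]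
    ring
  have hprod := (hF1.fun_mul hcoord).fun_mul hQ
  rw [hfirst, pd_add m ((hprod y).const_mul 2) ((hF0.fun_mul hQ') y), pd_const_mul m 2 (hprod y),
    pd_mul m ((hF1.fun_mul hcoord) y) (hQ y), pd_mul m (hF1 y) (hcoord y),
    pd_mul m (hF0 y) (hQ' y), pd_comp_norm_sq m (hF' _), pd_comp_norm_sq m (hF _), pd_coord,
    if_pos rfl]
  ring

lemma sum_pd_pd_comp_norm_sq_mul {F : ℝ → ℝ} {Q : EuclideanSpace ℝ (Fin N) → ℝ}
    (hF : Differentiable ℝ F) (hF' : Differentiable ℝ (deriv F)) (hQ : Differentiable ℝ Q)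
    (hQ' : ∀ m, Differentiable ℝ (pd N m Q)) (y : EuclideanSpace ℝ (Fin N)) :
    ∑ m, pd N m (pd N m fun y => F (‖y‖ ^ 2) * Q y) y
      = (4 * ‖y‖ ^ 2 * deriv (deriv F) (‖y‖ ^ 2) + 2 * N * deriv F (‖y‖ ^ 2)) * Q y
        + 4 * deriv F (‖y‖ ^ 2) * ∑ m, y m * pd N m Q y
        + F (‖y‖ ^ 2) * ∑ m, pd N m (pd N m Q) y := by
  simp only [fun m => pd_pd_comp_norm_sq_mul hF hF' hQ m (hQ' m) y, Finset.sum_add_distrib,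
    ← Finset.mul_sum, ← EuclideanSpace.real_norm_sq_eq, Finset.sum_const, Finset.card_univ,
    Fintype.card_fin, nsmul_eq_mul]
  ring

end PartialDerivatives

section ParameterDerivatives

lemma hasDerivAt_mul_self_of_continuousAt {h : ℝ → ℝ} (hh : ContinuousAt h 0) :
    HasDerivAt (fun a => a * h a) (h 0) 0 := by
  rw [hasDerivAt_iff_tendsto_slope]
  refine (hh.tendsto.mono_left nhdsWithin_le_nhds).congr' ?_
  filter_upwards [self_mem_nhdsWithin] with a (ha : a ≠ 0)
  simp [slope_def_field, ha]

variable {N : ℕ} {κ : Type*} [Fintype κ]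

lemma sum_sq_linear_comb_single (H : κ → Fin N → ℝ) (p q : Fin N) (a b : ℝ) :
    ∑ s, (∑ i, H s i * (a • EuclideanSpace.single p (1 : ℝ)
        + b • EuclideanSpace.single q (1 : ℝ) : EuclideanSpace ℝ (Fin N)) i) ^ 2
      = a ^ 2 * ∑ s, H s p ^ 2
        + b * (2 * a * ∑ s, H s p * H s q + b * ∑ s, H s q ^ 2) := by
  have hlinear : ∀ s, ∑ i, H s i * (a • EuclideanSpace.single p (1 : ℝ)
      + b • EuclideanSpace.single q (1 : ℝ) : EuclideanSpace ℝ (Fin N)) i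
      = a * H s p + b * H s q := fun s => by
    simp [mul_add, Finset.sum_add_distrib, mul_comm]
  simp only [hlinear, mul_add, Finset.mul_sum, ← Finset.sum_add_distrib]
  exact Finset.sum_congr rfl fun s _ => by ring

-- The quadratic form vanishes to second order at the origin, so no derivative of `g` survives.
lemma d2Param_mul_sum_sq {g : EuclideanSpace ℝ (Fin N) → ℝ} (hg : ContDiff ℝ 1 g)
    (H : κ → Fin N → ℝ) (p q : Fin N) :
    d2Param N p q (fun ξ => g ξ * ∑ s, (∑ i, H s i * ξ i) ^ 2)
      = 2 * g 0 * ∑ s, H s p * H s q := by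
  simp only [d2Param, sum_sq_linear_comb_single]
  set u : EuclideanSpace ℝ (Fin N) := EuclideanSpace.single p 1
  set v : EuclideanSpace ℝ (Fin N) := EuclideanSpace.single q 1
  set α := ∑ s, H s p ^ 2
  set β := ∑ s, H s p * H s q
  set γ := ∑ s, H s q ^ 2
  have hinner : ∀ a : ℝ, deriv (fun b : ℝ =>
      g (a • u + b • v) * (a ^ 2 * α + b * (2 * a * β + b * γ))) 0
        = a * (a * α * fderiv ℝ g (a • u) v + 2 * β * g (a • u)) := fun a => by
    have hline : HasDerivAt (fun b : ℝ => a • u + b • v) v 0 := by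
      simpa using ((hasDerivAt_id (0 : ℝ)).smul_const v).const_add (a • u)
    have hfactor : HasDerivAt (fun b : ℝ => g (a • u + b • v)) (fderiv ℝ g (a • u) v) 0 := by
      refine HasFDerivAt.comp_hasDerivAt 0 ?_ hline
      simpa using (hg.differentiable one_ne_zero (a • u)).hasFDerivAt
    have hform : HasDerivAt (fun b : ℝ => a ^ 2 * α + b * (2 * a * β + b * γ)) (2 * a * β) 0 := by
      simpa using (hasDerivAt_mul_self_of_continuousAt
        (h := fun b => 2 * a * β + b * γ) (by fun_prop)).const_add (a ^ 2 * α)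
    rw [(hfactor.fun_mul hform).deriv]
    simp only [zero_smul, add_zero, zero_mul]
    ring
  have hfderiv : Continuous fun a : ℝ => fderiv ℝ g (a • u) v :=
    ((hg.continuous_fderiv one_ne_zero).comp (by fun_prop)).clm_apply continuous_const
  have hg0 : Continuous fun a : ℝ => g (a • u) := hg.continuous.comp (by fun_prop)
  have houter : Continuous fun a : ℝ => a * α * fderiv ℝ g (a • u) v + 2 * β * g (a • u) :=
    ((continuous_mul_const α).mul hfderiv).add (hg0.const_mul (2 * β))
  simp_rw [hinner]
  rw [(hasDerivAt_mul_self_of_continuousAt houter.continuousAt).deriv]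
  simp only [zero_smul, zero_mul, zero_add]
  ring

end ParameterDerivatives

section CurvatureQuadraticForms

variable {N : ℕ} {W : Fin N → Fin N → Fin N → Fin N → ℝ}

lemma contDiff_Hmat (i j : Fin N) : ContDiff ℝ 1 (Hmat N W i j) := by
  unfold Hmat
  fun_prop

lemma isPosHomogeneous_Hmat (i j : Fin N) : IsPosHomogeneous 2 (Hmat N W i j) := by
  intro r _ y
  simp only [Hmat, PiLp.smul_apply, smul_eq_mul, Finset.mul_sum]
  exact Finset.sum_congr rfl fun p _ => Finset.sum_congr rfl fun q _ => by ring

lemma pd_Hmat (m i j : Fin N) :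
    pd N m (Hmat N W i j) = fun y => ∑ q, (W i m j q + W i q j m) * y q :=
  funext fun _ => pd_quadratic m fun p q => W i p j q

lemma sum_mul_pd_Hmat (i j : Fin N) (y : EuclideanSpace ℝ (Fin N)) :
    ∑ m, y m * pd N m (Hmat N W i j) y = 2 * Hmat N W i j y := by
  simp only [pd_Hmat, Hmat, Finset.mul_sum, add_mul, mul_add, Finset.sum_add_distrib, two_mul]
  congr 1
  · exact Finset.sum_congr rfl fun p _ => Finset.sum_congr rfl fun q _ => by ring
  · rw [Finset.sum_comm]
    exact Finset.sum_congr rfl fun p _ => Finset.sum_congr rfl fun q _ => by ring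

lemma sum_pd_pd_Hmat (hTrace : ∀ i j, ∑ m, W i m j m = 0) (i j : Fin N)
    (y : EuclideanSpace ℝ (Fin N)) : ∑ m, pd N m (pd N m (Hmat N W i j)) y = 0 := by
  simp only [pd_Hmat, pd_linear, Finset.sum_add_distrib, hTrace, add_zero]

lemma sum_pd_pd_Hbar (hTrace : ∀ i j, ∑ m, W i m j m = 0) {f : ℝ → ℝ}
    (hf : Differentiable ℝ f) (hf' : Differentiable ℝ (deriv f)) (i j : Fin N)
    (y : EuclideanSpace ℝ (Fin N)) :
    ∑ m, pd N m (pd N m (Hbar N W f i j)) y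
      = 2 * ((N + 4) * deriv f (‖y‖ ^ 2) + 2 * ‖y‖ ^ 2 * deriv (deriv f) (‖y‖ ^ 2))
        * Hmat N W i j y := by
  have hpd : ∀ m, Differentiable ℝ (pd N m (Hmat N W i j)) := fun m => by
    rw [pd_Hmat]
    fun_prop
  have hlap := sum_pd_pd_comp_norm_sq_mul hf hf'
    ((contDiff_Hmat (W := W) i j).differentiable one_ne_zero) hpd y
  rw [sum_mul_pd_Hmat, sum_pd_pd_Hmat hTrace] at hlap
  unfold Hbar
  rw [hlap]
  ring

lemma Hmat_symm (hPair : ∀ i p j q, W i p j q = W j q i p) (i j : Fin N)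
    (y : EuclideanSpace ℝ (Fin N)) : Hmat N W i j y = Hmat N W j i y := by
  simp only [Hmat, hPair i]
  rw [Finset.sum_comm]
  exact Finset.sum_congr rfl fun p _ => Finset.sum_congr rfl fun q _ => by ring

lemma sum_Hmat_mul_coord (hSkew : ∀ i p j q, W i p j q = -W i p q j) (s : Fin N)
    (y : EuclideanSpace ℝ (Fin N)) : ∑ i, Hmat N W s i y * y i = 0 := by
  have hexpand : ∑ i, Hmat N W s i y * y i = ∑ p, ∑ i, ∑ q, W s p i q * y p * y q * y i := by
    simp only [Hmat, Finset.sum_mul]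
    exact Finset.sum_comm
  have hswap : ∑ p, ∑ i, ∑ q, W s p i q * y p * y q * y i
      = -∑ p, ∑ i, ∑ q, W s p i q * y p * y q * y i := by
    simp only [← Finset.sum_neg_distrib]
    refine Finset.sum_congr rfl fun p _ => Finset.sum_comm.trans <|
      Finset.sum_congr rfl fun q _ => Finset.sum_congr rfl fun i _ => ?_
    rw [hSkew]
    ring
  linarith

lemma integral_sphereMeasure_sum_Hmat_mul_Hmat (hTrace : ∀ i j, ∑ m, W i m j m = 0)
    (p q : Fin N) :
    ∫ ω, ∑ s, Hmat N W s p ω.1 * Hmat N W s q ω.1 ∂sphereMeasure N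
      = sphereArea N / (N * (N + 2))
        * ∑ s, ∑ a, ∑ b, W s a p b * (W s a q b + W s b q a) := by
  have : Nonempty (Fin N) := ⟨p⟩
  have hint : ∀ s, Integrable (fun ω : Metric.sphere (0 : EuclideanSpace ℝ (Fin N)) 1 =>
      Hmat N W s p ω.1 * Hmat N W s q ω.1) volume.toSphere := fun s =>
    (((contDiff_Hmat s p).continuous.mul (contDiff_Hmat s q).continuous).comp
      continuous_subtype_val).integrable_of_hasCompactSupport (.of_compactSpace _)
  unfold sphereMeasure
  rw [integral_finsetSum _ fun s _ => hint s, Finset.mul_sum]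
  refine Finset.sum_congr rfl fun s _ => ?_
  have hform := integral_toSphere_quadraticForm_mul (fun a b => W s a p b) fun a b => W s a q b
  simp only [hTrace, zero_mul, zero_add, Fintype.card_fin] at hform
  exact hform

lemma isPosHomogeneous_sum_Hmat_mul_Hmat (p q : Fin N) :
    IsPosHomogeneous (2 + 2) fun y => ∑ s, Hmat N W s p y * Hmat N W s q y :=
  .sum _ fun s => (isPosHomogeneous_Hmat s p).mul (isPosHomogeneous_Hmat s q)

lemma pow_finrank_sub_one_mul_mul_pow (hN : 0 < N) (x r : ℝ) :
    r ^ (Module.finrank ℝ (EuclideanSpace ℝ (Fin N)) - 1) * (x * r ^ (2 + 2))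
      = x * r ^ (N + 3) := by
  rw [finrank_euclideanSpace_fin, show N + 3 = N - 1 + (2 + 2) by lia, pow_add r (N - 1)]
  ring

lemma integrable_comp_norm_mul_sum_Hmat_mul_Hmat (p q : Fin N) {φ : ℝ → ℝ}
    (hφ : IntegrableOn (fun r => φ r * r ^ (N + 3)) (Set.Ioi 0)) :
    Integrable fun y => φ ‖y‖ * ∑ s, Hmat N W s p y * Hmat N W s q y := by
  have : Nonempty (Fin N) := ⟨p⟩
  have hcont : Continuous fun y => ∑ s, Hmat N W s p y * Hmat N W s q y :=
    continuous_finsetSum _ fun s _ =>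
      (contDiff_Hmat s p).continuous.mul (contDiff_Hmat s q).continuous
  refine integrable_comp_norm_mul_of_isPosHomogeneous volume
    (isPosHomogeneous_sum_Hmat_mul_Hmat p q) hcont ?_
  simpa only [pow_finrank_sub_one_mul_mul_pow p.pos] using hφ

lemma integral_comp_norm_mul_sum_Hmat_mul_Hmat (hTrace : ∀ i j, ∑ m, W i m j m = 0)
    (p q : Fin N) (φ : ℝ → ℝ) :
    ∫ y, φ ‖y‖ * ∑ s, Hmat N W s p y * Hmat N W s q y
      = sphereArea N / (N * (N + 2)) * (∑ s, ∑ a, ∑ b, W s a p b * (W s a q b + W s b q a))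
        * ∫ r in Set.Ioi (0 : ℝ), φ r * r ^ (N + 3) := by
  have : Nonempty (Fin N) := ⟨p⟩
  have hpolar := integral_comp_norm_mul_of_isPosHomogeneous volume
    (isPosHomogeneous_sum_Hmat_mul_Hmat (W := W) p q) φ
  simp only [pow_finrank_sub_one_mul_mul_pow p.pos] at hpolar
  rw [hpolar, ← integral_sphereMeasure_sum_Hmat_mul_Hmat hTrace]
  rfl

lemma sum_symmetrized_mul_symmetrized (hSkewLeft : ∀ i p j q, W i p j q = -W p i j q)
    (hSkewRight : ∀ i p j q, W i p j q = -W i p q j) (hPair : ∀ i p j q, W i p j q = W j q i p)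
    (p q : Fin N) :
    ∑ i, ∑ j, ∑ k, (W i k j p + W i p j k) * (W i k j q + W i q j k)
      = 2 * ∑ s, ∑ a, ∑ b, W s a p b * (W s a q b + W s b q a) := by
  have hflip : ∀ i j k l, W i j k l = W j i l k := fun i j k l => by
    rw [hSkewLeft, hSkewRight, neg_neg]
  have hrelabel : ∑ s, ∑ a, ∑ b, W s a p b * (W s a q b + W s b q a)
      = ∑ i, ∑ j, ∑ k, W i k j p * (W i k j q + W i q j k) := by
    rw [Finset.sum_comm]
    refine Finset.sum_congr rfl fun i _ => Finset.sum_comm.trans <|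
      Finset.sum_congr rfl fun j _ => Finset.sum_congr rfl fun k _ => ?_
    rw [hflip k i p j, hflip k i q j, hPair k j q i, hflip q i k j]
  have hmirror : ∑ i, ∑ j, ∑ k, W i p j k * (W i k j q + W i q j k)
      = ∑ i, ∑ j, ∑ k, W i k j p * (W i k j q + W i q j k) := by
    rw [Finset.sum_comm]
    refine Finset.sum_congr rfl fun i _ => Finset.sum_congr rfl fun j _ =>
      Finset.sum_congr rfl fun k _ => ?_
    rw [hPair j p i k, hPair j k i q, hPair j q i k, add_comm]
  simp only [add_mul, Finset.sum_add_distrib]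
  rw [hmirror, hrelabel, two_mul]

end CurvatureQuadraticForms

section EnergyDensity

/-- The radial factor of the energy density: `f · Δ(f(|y|²) H) = 2 radialProfile(|y|²) H` whenever
the entries of `H` are harmonic quadratic forms. -/
def radialProfile (N : ℕ) (f : ℝ → ℝ) (t : ℝ) : ℝ :=
  ((N : ℝ) + 4) * f t * deriv f t + 2 * t * f t * deriv (deriv f) t

/-- The bubble `u(y; ξ)` with concentration parameter `lam` and centre `ξ`. -/
def bubble (N : ℕ) (lam : ℝ) (ξ y : EuclideanSpace ℝ (Fin N)) : ℝ :=
  (lam / (lam ^ 2 + ‖y - ξ‖ ^ 2)) ^ (((N : ℝ) - 4) / 2)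

/-- The density `H̄_{si} ΔH̄_{js} ∂_i u ∂_j u` (summed over repeated indices) for an arbitrary
function `u`; the expression `E(y, ξ')` is the case where `u` is the bubble centred at `ξ'`. -/
def energyDensity (N : ℕ) (W : Fin N → Fin N → Fin N → Fin N → ℝ) (f : ℝ → ℝ)
    (u : EuclideanSpace ℝ (Fin N) → ℝ) (y : EuclideanSpace ℝ (Fin N)) : ℝ :=
  ∑ i : Fin N, ∑ j : Fin N, ∑ m : Fin N, ∑ s : Fin N,
    Hbar N W f s i y * pd N m (pd N m (Hbar N W f j s)) y * pd N i u y * pd N j u y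

lemma hasDerivAt_div_sq_add_rpow {lam t : ℝ} (hlam : 0 < lam) (ht : 0 ≤ t) (a : ℝ) :
    HasDerivAt (fun t => (lam / (lam ^ 2 + t)) ^ a)
      (-(a / lam) * (lam / (lam ^ 2 + t)) ^ (a + 1)) t := by
  have hden : 0 < lam ^ 2 + t := by positivity
  have hbase : 0 < lam / (lam ^ 2 + t) := by positivity
  have hderiv : HasDerivAt (fun t => lam / (lam ^ 2 + t)) (-lam / (lam ^ 2 + t) ^ 2) t := by
    simpa using (hasDerivAt_const t lam).fun_div ((hasDerivAt_id t).const_add (lam ^ 2)) hden.ne'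
  convert hderiv.rpow_const (p := a) (Or.inl hbase.ne') using 1
  rw [show a + 1 = a - 1 + (2 : ℕ) by push_cast; ring, Real.rpow_add hbase, Real.rpow_natCast]
  field_simp

variable {N : ℕ} {lam : ℝ}

lemma pd_bubble (hlam : 0 < lam) (i : Fin N) (ξ y : EuclideanSpace ℝ (Fin N)) :
    pd N i (bubble N lam ξ) y
      = -((N - 4) / lam * (lam / (lam ^ 2 + ‖y - ξ‖ ^ 2)) ^ (((N : ℝ) - 2) / 2))
        * (y i - ξ i) := by
  have hderiv := hasDerivAt_div_sq_add_rpow hlam (sq_nonneg ‖y - ξ‖) (((N : ℝ) - 4) / 2)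
  rw [show ((N : ℝ) - 4) / 2 + 1 = (N - 2) / 2 by ring] at hderiv
  refine (pd_comp_norm_sub_sq i ξ hderiv).trans ?_
  ring

lemma sq_rpow_sub_two_div_two (hN : 2 ≤ N) {x : ℝ} (hx : 0 ≤ x) :
    (x ^ (((N : ℝ) - 2) / 2)) ^ 2 = x ^ (N - 2) := by
  rw [← Real.rpow_mul_natCast hx, ← Real.rpow_natCast, Nat.cast_sub hN]
  congr 1
  push_cast
  ring

variable {W : Fin N → Fin N → Fin N → Fin N → ℝ} {f : ℝ → ℝ}

-- `H(y) y = 0`, so `y - ξ` may be replaced by `-ξ`.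
lemma energyDensity_of_pd_eq_mul_sub (hSkew : ∀ i p j q, W i p j q = -W i p q j)
    (hPair : ∀ i p j q, W i p j q = W j q i p) (hTrace : ∀ i j, ∑ m, W i m j m = 0)
    (hf : Differentiable ℝ f) (hf' : Differentiable ℝ (deriv f))
    {u : EuclideanSpace ℝ (Fin N) → ℝ} {ξ y : EuclideanSpace ℝ (Fin N)} {c : ℝ}
    (hu : ∀ i, pd N i u y = c * (y i - ξ i)) :
    energyDensity N W f u y
      = 2 * c ^ 2 * radialProfile N f (‖y‖ ^ 2) * ∑ s, (∑ i, Hmat N W s i y * ξ i) ^ 2 := by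
  have hlap : ∀ i j, ∑ m, ∑ s, Hbar N W f s i y * pd N m (pd N m (Hbar N W f j s)) y
        * pd N i u y * pd N j u y
      = 2 * c ^ 2 * radialProfile N f (‖y‖ ^ 2)
        * ∑ s, Hmat N W s i y * (y i - ξ i) * (Hmat N W s j y * (y j - ξ j)) := fun i j => by
    rw [Finset.sum_comm, Finset.mul_sum]
    refine Finset.sum_congr rfl fun s _ => ?_
    rw [← Finset.sum_mul, ← Finset.sum_mul, ← Finset.mul_sum, sum_pd_pd_Hbar hTrace hf hf', hu, hu,
      Hmat_symm hPair j s, Hbar, radialProfile]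
    ring
  have hsquare : ∀ s, ∑ i, ∑ j, Hmat N W s i y * (y i - ξ i) * (Hmat N W s j y * (y j - ξ j))
      = (∑ i, Hmat N W s i y * ξ i) ^ 2 := fun s => by
    rw [← Finset.sum_mul_sum]
    simp only [mul_sub, Finset.sum_sub_distrib, sum_Hmat_mul_coord hSkew]
    ring
  simp only [energyDensity, hlap, ← Finset.mul_sum]
  simp only [← hsquare]
  congr 1
  exact (Finset.sum_congr rfl fun i _ => Finset.sum_comm).trans Finset.sum_comm

lemma energyDensity_bubble (hN : 4 ≤ N) (hSkew : ∀ i p j q, W i p j q = -W i p q j)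
    (hPair : ∀ i p j q, W i p j q = W j q i p) (hTrace : ∀ i j, ∑ m, W i m j m = 0)
    (hf : Differentiable ℝ f) (hf' : Differentiable ℝ (deriv f)) (hlam : 0 < lam)
    (ξ y : EuclideanSpace ℝ (Fin N)) :
    energyDensity N W f (bubble N lam ξ) y
      = 2 * (N - 4) ^ 2 * lam ^ (N - 4) * radialProfile N f (‖y‖ ^ 2)
          / (lam ^ 2 + ‖y - ξ‖ ^ 2) ^ (N - 2)
        * ∑ s, (∑ i, Hmat N W s i y * ξ i) ^ 2 := by
  rw [energyDensity_of_pd_eq_mul_sub hSkew hPair hTrace hf hf' fun i => pd_bubble hlam i ξ y,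
    neg_sq, mul_pow, sq_rpow_sub_two_div_two (by lia) (by positivity), div_pow lam,
    show N - 2 = N - 4 + 2 by lia, pow_add lam]
  field_simp

lemma d2Param_energyDensity_bubble (hN : 4 ≤ N) (hSkew : ∀ i p j q, W i p j q = -W i p q j)
    (hPair : ∀ i p j q, W i p j q = W j q i p) (hTrace : ∀ i j, ∑ m, W i m j m = 0)
    (hf : Differentiable ℝ f) (hf' : Differentiable ℝ (deriv f)) (hlam : 0 < lam)
    (p q : Fin N) (y : EuclideanSpace ℝ (Fin N)) :
    d2Param N p q (fun ξ => energyDensity N W f (bubble N lam ξ) y)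
      = 4 * (N - 4) ^ 2 * lam ^ (N - 4) * radialProfile N f (‖y‖ ^ 2)
          / (lam ^ 2 + ‖y‖ ^ 2) ^ (N - 2)
        * ∑ s, Hmat N W s p y * Hmat N W s q y := by
  have hden : ContDiff ℝ 1 fun ξ : EuclideanSpace ℝ (Fin N) =>
      (lam ^ 2 + ‖y - ξ‖ ^ 2) ^ (N - 2) :=
    (contDiff_const.add ((contDiff_const.sub contDiff_id).norm_sq ℝ)).pow _
  have hweight : ContDiff ℝ 1 fun ξ : EuclideanSpace ℝ (Fin N) =>
      2 * (N - 4) ^ 2 * lam ^ (N - 4) * radialProfile N f (‖y‖ ^ 2)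
        / (lam ^ 2 + ‖y - ξ‖ ^ 2) ^ (N - 2) :=
    contDiff_const.div hden fun ξ => by positivity
  simp only [energyDensity_bubble hN hSkew hPair hTrace hf hf' hlam]
  rw [d2Param_mul_sum_sq hweight, sub_zero]
  ring

end EnergyDensity

section RadialIntegrability

open Polynomial

lemma integrableOn_Ioi_eval_div_sq_add_sq_pow (Q : ℝ[X]) {n : ℕ} (hQ : Q.natDegree + 2 ≤ 2 * n)
    {lam : ℝ} (hlam : 0 < lam) :
    IntegrableOn (fun r => Q.eval r / (lam ^ 2 + r ^ 2) ^ n) (Set.Ioi 0) := by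
  have hcont : Continuous fun r => Q.eval r / (lam ^ 2 + r ^ 2) ^ n :=
    Q.continuous.div (by fun_prop) fun r => by positivity
  have hdecay : (fun r => Q.eval r / (lam ^ 2 + r ^ 2) ^ n) =O[Filter.atTop]
      fun r : ℝ => r ^ (-2 : ℝ) := by
    have hdegree : (X ^ 2 * Q).degree ≤ ((X ^ 2 + C (lam ^ 2)) ^ n).degree := by
      have hmonic : ((X ^ 2 + C (lam ^ 2)) ^ n).Monic := (monic_X_pow_add_C _ two_ne_zero).pow n
      rw [degree_eq_natDegree hmonic.ne_zero, natDegree_pow, natDegree_X_pow_add_C]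
      exact degree_le_of_natDegree_le (natDegree_mul_le.trans (by rw [natDegree_X_pow]; lia))
    refine ((isBigO_atTop_of_degree_le _ _ hdegree).mul (Asymptotics.isBigO_refl
      (fun r => (r ^ 2 * (lam ^ 2 + r ^ 2) ^ n)⁻¹) _)).congr' ?_ ?_ <;>
    filter_upwards [Filter.eventually_gt_atTop 0] with r hr
    · simp only [eval_mul, eval_pow, eval_X]
      field_simp
    · simp only [eval_pow, eval_add, eval_X, eval_C, Real.rpow_neg hr.le, Real.rpow_ofNat]
      field_simp
      ring
  exact ((hcont.locallyIntegrable.locallyIntegrableOn _).integrableOn_of_isBigO_atTop hdecay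
    (integrableAtFilter_rpow_atTop_iff.2 (by norm_num))).mono_set Set.Ioi_subset_Ici_self

lemma natDegree_X_mul_derivative_le (P : ℝ[X]) : (X * derivative P).natDegree ≤ P.natDegree := by
  rcases eq_or_ne P.natDegree 0 with hP | hP
  · simp [derivative_of_natDegree_zero hP]
  · have hderiv := natDegree_derivative_le P
    refine natDegree_mul_le.trans ?_
    rw [natDegree_X]
    lia

lemma integrableOn_Ioi_radialProfile_eval (N : ℕ) (P : ℝ[X]) (hP : 4 * P.natDegree + 9 ≤ N)
    {lam : ℝ} (hlam : 0 < lam) :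
    IntegrableOn (fun r => radialProfile N (fun x => P.eval x) (r ^ 2) * r ^ (N + 3)
      / (lam ^ 2 + r ^ 2) ^ (N - 2)) (Set.Ioi 0) := by
  set Q : ℝ[X] := C ((N : ℝ) + 4) * (P * derivative P)
    + C 2 * (P * (X * derivative (derivative P)))
  have hP' : (derivative P).natDegree ≤ P.natDegree := (natDegree_derivative_le P).trans (by lia)
  have hQ : Q.natDegree ≤ 2 * P.natDegree := by
    refine natDegree_add_le_of_degree_le ((natDegree_C_mul_le _ _).trans ?_)
      ((natDegree_C_mul_le _ _).trans ?_)
    · exact natDegree_mul_le.trans (by lia)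
    · have hP'' := natDegree_X_mul_derivative_le (derivative P)
      exact natDegree_mul_le.trans (by lia)
  have hdegree : (Q.comp (X ^ 2) * X ^ (N + 3)).natDegree ≤ 2 * (2 * P.natDegree) + (N + 3) := by
    refine natDegree_mul_le.trans (add_le_add ?_ (natDegree_X_pow_le _))
    rw [natDegree_comp, natDegree_X_pow]
    lia
  refine (integrableOn_Ioi_eval_div_sq_add_sq_pow (Q.comp (X ^ 2) * X ^ (N + 3)) (n := N - 2)
    (by lia) hlam).congr_fun (fun r _ => ?_) measurableSet_Ioi
  have hderiv : ∀ P : ℝ[X], deriv (fun x => P.eval x) = fun x => (derivative P).eval x :=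
    fun P => funext fun x => P.deriv
  simp only [radialProfile, hderiv, Q, eval_mul, eval_comp, eval_add, eval_C, eval_pow, eval_X]
  ring

end RadialIntegrability

theorem stmt_18_general {N : ℕ} (hN : 4 ≤ N) {W : Fin N → Fin N → Fin N → Fin N → ℝ}
    (hW1 : ∀ i p j q, W i p j q = -W p i j q) (hW2 : ∀ i p j q, W i p j q = -W i p q j)
    (hW3 : ∀ i p j q, W i p j q = W j q i p) (hTrace : ∀ p q, ∑ i, W i p i q = 0)
    {f : ℝ → ℝ} (hf : Differentiable ℝ f) (hf' : Differentiable ℝ (deriv f))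
    {lam : ℝ} (hlam : 0 < lam)
    (hint : IntegrableOn (fun r => radialProfile N f (r ^ 2) * r ^ (N + 3)
      / (lam ^ 2 + r ^ 2) ^ (N - 2)) (Set.Ioi 0)) :
    (∀ y, energyDensity N W f (bubble N lam 0) y = 0) ∧
    ∀ p q,
      Integrable (fun y => d2Param N p q fun ξ => energyDensity N W f (bubble N lam ξ) y) ∧
      ∫ y, d2Param N p q (fun ξ => energyDensity N W f (bubble N lam ξ) y)
        = sphereArea N
          * (∑ i, ∑ j, ∑ k, (W i k j p + W i p j k) * (W i k j q + W i q j k))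
          * lam ^ (N - 4) * (2 * ((N : ℝ) - 4) ^ 2 / (N * (N + 2)))
          * ∫ r in Set.Ioi (0 : ℝ), radialProfile N f (r ^ 2) * r ^ (N + 3)
            / (lam ^ 2 + r ^ 2) ^ (N - 2) := by
  have hTrace' : ∀ i j, ∑ m, W i m j m = 0 := fun i j => (Finset.sum_congr rfl fun m _ => by
    rw [hW1, hW2, neg_neg]).trans (hTrace i j)
  refine ⟨fun y => by simp [energyDensity_bubble hN hW2 hW3 hTrace' hf hf' hlam], fun p q => ?_⟩
  set φ : ℝ → ℝ := fun r => 4 * (N - 4) ^ 2 * lam ^ (N - 4) * radialProfile N f (r ^ 2)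
    / (lam ^ 2 + r ^ 2) ^ (N - 2)
  have hd2 : ∀ y, d2Param N p q (fun ξ => energyDensity N W f (bubble N lam ξ) y)
      = φ ‖y‖ * ∑ s, Hmat N W s p y * Hmat N W s q y :=
    d2Param_energyDensity_bubble hN hW2 hW3 hTrace' hf hf' hlam p q
  have hφ : (fun r => φ r * r ^ (N + 3)) = fun r => 4 * (N - 4) ^ 2 * lam ^ (N - 4)
      * (radialProfile N f (r ^ 2) * r ^ (N + 3) / (lam ^ 2 + r ^ 2) ^ (N - 2)) :=
    funext fun r => by ring
  simp only [hd2]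
  refine ⟨integrable_comp_norm_mul_sum_Hmat_mul_Hmat p q (hφ ▸ hint.const_mul _), ?_⟩
  rw [integral_comp_norm_mul_sum_Hmat_mul_Hmat hTrace', hφ, integral_const_mul,
    sum_symmetrized_mul_symmetrized hW1 hW2 hW3]
  ring

theorem stmt_18 (N : ℕ) (hN : 25 ≤ N)
    (W : Fin N → Fin N → Fin N → Fin N → ℝ)
    (hW1 : ∀ i p j q, W i p j q = - W p i j q)
    (hW2 : ∀ i p j q, W i p j q = - W i p q j)
    (hW3 : ∀ i p j q, W i p j q = W j q i p)
    (hBianchi : ∀ i p j q, W i p j q + W i j q p + W i q p j = 0)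
    (hTrace : ∀ p q, ∑ i : Fin N, W i p i q = 0)
    (f : ℝ → ℝ)
    (hf : ∃ P : Polynomial ℝ, P.degree ≤ 4 ∧ ∀ x, f x = P.eval x)
    (lam' : ℝ) (hlam' : 0 < lam')
    (U : EuclideanSpace ℝ (Fin N) → EuclideanSpace ℝ (Fin N) → ℝ)
    (hU : ∀ ξ' y, U ξ' y = (lam' / (lam' ^ 2 + ‖y - ξ'‖ ^ 2)) ^ (((N : ℝ) - 4) / 2))
    (E : EuclideanSpace ℝ (Fin N) → EuclideanSpace ℝ (Fin N) → ℝ)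
    (hE : ∀ y ξ', E y ξ'
        = ∑ i : Fin N, ∑ j : Fin N, ∑ m : Fin N, ∑ s : Fin N,
            Hbar N W f s i y * pd N m (pd N m (Hbar N W f j s)) y
              * pd N i (U ξ') y * pd N j (U ξ') y) :
    ((∫ y : EuclideanSpace ℝ (Fin N), E y 0) = 0) ∧
    (∀ p q : Fin N,
      (∫ y : EuclideanSpace ℝ (Fin N), d2Param N p q (E y))
        = sphereArea N
            * (∑ i : Fin N, ∑ j : Fin N, ∑ k : Fin N,
                (W i k j p + W i p j k) * (W i k j q + W i q j k))
            * lam' ^ (N - 4)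
            * (2 * ((N : ℝ) - 4) ^ 2 / (N * ((N : ℝ) + 2)))
            * ∫ r in Set.Ioi (0 : ℝ),
                (((N : ℝ) + 4) * f (r ^ 2) * deriv f (r ^ 2)
                    + 2 * r ^ 2 * f (r ^ 2) * deriv (deriv f) (r ^ 2))
                  * r ^ (N + 3) / (lam' ^ 2 + r ^ 2) ^ (N - 2)) := by
  obtain ⟨P, hdeg, hP⟩ := hf
  obtain rfl : f = fun x => P.eval x := funext hP
  obtain rfl : U = bubble N lam' := funext₂ hU
  obtain rfl : E = fun y ξ' => energyDensity N W (fun x => P.eval x) (bubble N lam' ξ') y :=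
    funext₂ hE
  have hderiv : deriv (fun x => P.eval x) = fun x => P.derivative.eval x := funext fun x => P.deriv
  have hdegree : P.natDegree ≤ 4 := Polynomial.natDegree_le_of_degree_le hdeg
  obtain ⟨hzero, hsecond⟩ := stmt_18_general (by lia) hW1 hW2 hW3 hTrace P.differentiable
    (hderiv ▸ P.derivative.differentiable) hlam'
    (integrableOn_Ioi_radialProfile_eval N P (by lia) hlam')
  exact ⟨by simp [hzero], fun p q => (hsecond p q).2⟩
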